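/- Let M ∈ ℚ_+^{n×m} be nonzero and column-stochastic, and let ℳ be the LMC constructed from M. Let d ∈ ℕ and let ℳ' be any LMC with d+2 states over the same alphabet such that there exists a row-stochastic matrix A with A·B_{ℳ'} = B_ℳ. Then there exist nonnegative matrices W ∈ ℝ_+^{n×d} and H ∈ ℝ_+^{d×m} with M = W·H; moreover, if rk(ℳ') = rk(ℳ), then rank(W) = rank(M). -/

import Mathlib

open Matrix

/-- `μ` is (the transition function of) a labelled Markov chain: all entries lie in
`[0,1]` and `∑_{σ ∈ Σ} μ(σ)` is row-stochastic. -/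
def IsLMC {A S : Type} [Fintype A] [Fintype S] (μ : A → Matrix S S ℝ) : Prop :=
  (∀ a i j, 0 ≤ μ a i j) ∧ (∀ a i j, μ a i j ≤ 1) ∧ (∀ i, ∑ a, ∑ j, μ a i j = 1)

/-- Transition matrix of a labelled Markov chain extended to words:
`μ(σ₁…σ_k) = μ(σ₁) ⋯ μ(σ_k)`, with `μ(ε) = I`. -/
noncomputable def lmcWord {A S : Type} [Fintype S] [DecidableEq S]
    (μ : A → Matrix S S ℝ) (w : List A) : Matrix S S ℝ :=
  (w.map μ).prod

/-- Entry of the backward matrix: `(B_ℳ)_{i,w} = e_i^⊤ μ(w) 𝟙`. -/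
noncomputable def lmcB {A S : Type} [Fintype S] [DecidableEq S]
    (μ : A → Matrix S S ℝ) (i : S) (w : List A) : ℝ :=
  ∑ j, lmcWord μ w i j

/-- The rank of an LMC: the dimension of the span of the columns of its backward matrix. -/
noncomputable def lmcRank {A S : Type} [Fintype S] [DecidableEq S]
    (μ : A → Matrix S S ℝ) : ℕ :=
  Module.finrank ℝ
    (Submodule.span ℝ (Set.range fun w : List A => fun i : S => lmcB μ i w))

/-- `ℳ'` (with transitions `μ'`) covers `ℳ` (with transitions `μ`) iff there is a
row-stochastic matrix `C` with `C · B_{ℳ'} = B_ℳ`. -/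
def lmcCovers {A S S' : Type} [Fintype S] [DecidableEq S] [Fintype S'] [DecidableEq S']
    (μ' : A → Matrix S' S' ℝ) (μ : A → Matrix S S ℝ) : Prop :=
  ∃ C : S → S' → ℝ, (∀ i l, 0 ≤ C i l) ∧ (∀ i, ∑ l, C i l = 1) ∧
    ∀ i (w : List A), ∑ l, C i l * lmcB μ' l w = lmcB μ i w

/-- The LMC constructed from a column-stochastic matrix `M ∈ ℝ_+^{n×m}`:
`μ(a_i)_{0,i} = 1/m`, `μ(b_j)_{i,m+1} = M_{j,i}`, `μ(✓)_{m+1,m+1} = 1`, otherwise `0`. -/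
noncomputable def lmcMu {n m : ℕ} (M : Matrix (Fin n) (Fin m) ℝ) :
    (Fin m ⊕ Fin n ⊕ Unit) →
      Matrix (Unit ⊕ Fin m ⊕ Unit) (Unit ⊕ Fin m ⊕ Unit) ℝ
  | Sum.inl i => Matrix.of fun p q =>
      match p, q with
      | Sum.inl _, Sum.inr (Sum.inl i') => if i' = i then 1 / (m : ℝ) else 0
      | _, _ => 0
  | Sum.inr (Sum.inl j) => Matrix.of fun p q =>
      match p, q with
      | Sum.inr (Sum.inl i), Sum.inr (Sum.inr _) => M j i
      | _, _ => 0
  | Sum.inr (Sum.inr _) => Matrix.of fun p q =>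
      match p, q with
      | Sum.inr (Sum.inr _), Sum.inr (Sum.inr _) => 1
      | _, _ => 0

/-!
States of `ℳ'` in the support of the row of the covering matrix `C` belonging to a state `p` of `ℳ`
can only emit words that `p` emits. Hence some state `t` of `ℳ'` emits no `a_i` and no `b_j`
(take `p = m + 1`), some state `u` emits no `b_j` and no `✓` (take `p = 0`), and `t ≠ u` since
every state emits some letter. So in `M_{j,i} = ∑_l C_{i,l} B_{ℳ'}(l, b_j)` the states `t` and `u`
contribute nothing, and the other `d` states give `M = W H`.

For the ranks, `C` maps the column space of `B_{ℳ'}` onto that of `B_ℳ`. If these have the same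
dimension, then `C` is injective on the former and so preserves the rank of the columns indexed by
the words `b_j`. These have rank at least `rank W` in `B_{ℳ'}`, and rank at most `rank M` in `B_ℳ`.
-/

open Module

section LinearAlgebra

theorem finrank_map_of_le_of_finrank_map_eq {K V V' : Type*} [DivisionRing K]
    [AddCommGroup V] [Module K V] [AddCommGroup V'] [Module K V'] (f : V →ₗ[K] V')
    {U T : Submodule K V} [FiniteDimensional K T] (hUT : U ≤ T)
    (hT : finrank K (T.map f) = finrank K T) : finrank K (U.map f) = finrank K U := by
  have hinj : Function.Injective (f.submoduleMap T) :=
    (LinearMap.injective_iff_surjective_of_finrank_eq_finrank hT.symm).2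
      (f.submoduleMap_surjective T)
  rw [← LinearMap.range_domRestrict]
  refine LinearMap.finrank_range_of_inj fun x y hxy => ?_
  have hT_eq : (⟨x, hUT x.2⟩ : T) = ⟨y, hUT y.2⟩ := hinj (Subtype.ext hxy)
  exact Subtype.ext (Subtype.mk.inj hT_eq)

theorem exists_embedding_range_eq_compl {α : Type*} [Fintype α] {d : ℕ} (s : Finset α)
    (hs : Fintype.card α = d + s.card) : ∃ f : Fin d ↪ α, Set.range f = (s : Set α)ᶜ := by
  classical
  have hcard : sᶜ.card = d := by rw [Finset.card_compl, hs, Nat.add_sub_cancel]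
  let e : Fin d ≃ ↥sᶜ := (Finset.equivFinOfCardEq hcard).symm
  refine ⟨e.toEmbedding.trans (Function.Embedding.subtype _), ?_⟩
  calc Set.range (Subtype.val ∘ e) = Set.range (Subtype.val : ↥sᶜ → α) := by
        rw [EquivLike.range_comp]
    _ = (s : Set α)ᶜ := by rw [Subtype.range_val, ← Finset.coe_compl]

theorem mul_eq_submatrix_mul_submatrix {l m n o R : Type*} [Fintype m] [Fintype o]
    [NonUnitalNonAssocSemiring R] (A : Matrix l m R) (B : Matrix m n R) {f : o → m}
    (hf : Function.Injective f) (hA : ∀ i, ∀ k ∉ Set.range f, A i k = 0) :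
    A * B = A.submatrix id f * B.submatrix f id := by
  ext i j
  exact (Fintype.sum_of_injective f hf (fun k => A i (f k) * B (f k) j) (fun k => A i k * B k j)
    (fun k hk => mul_eq_zero_of_left (hA i k hk) _) fun _ => rfl).symm

end LinearAlgebra

section LabelledMarkovChain

variable {A S S' β : Type} [Fintype S] [DecidableEq S] [Fintype S'] [DecidableEq S']
  {μ : A → Matrix S S ℝ} {μ' : A → Matrix S' S' ℝ}

theorem lmcB_nil (μ : A → Matrix S S ℝ) (i : S) : lmcB μ i [] = 1 := by
  simp [lmcB, lmcWord, Matrix.one_apply]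

theorem lmcB_cons (μ : A → Matrix S S ℝ) (i : S) (a : A) (w : List A) :
    lmcB μ i (a :: w) = ∑ k, μ a i k * lmcB μ k w := by
  simp only [lmcB, lmcWord, List.map_cons, List.prod_cons, Matrix.mul_apply, Finset.mul_sum]
  exact Finset.sum_comm

theorem lmcB_singleton (μ : A → Matrix S S ℝ) (i : S) (a : A) : lmcB μ i [a] = ∑ k, μ a i k := by
  simp only [lmcB_cons, lmcB_nil, mul_one]

namespace IsLMC

variable [Fintype A]

theorem lmcB_nonneg (hμ : IsLMC μ) (i : S) (w : List A) : 0 ≤ lmcB μ i w := by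
  induction w generalizing i with
  | nil => exact (lmcB_nil μ i).symm ▸ zero_le_one
  | cons a w ih =>
    rw [lmcB_cons]
    exact Finset.sum_nonneg fun k _ => mul_nonneg (hμ.1 a i k) (ih k)

theorem exists_lmcB_singleton_ne_zero (hμ : IsLMC μ) (i : S) : ∃ a, lmcB μ i [a] ≠ 0 := by
  have hsum : ∑ a, lmcB μ i [a] ≠ 0 := by
    simp only [lmcB_singleton, hμ.2.2 i, ne_eq, one_ne_zero, not_false_eq_true]
  obtain ⟨a, -, ha⟩ := Finset.exists_ne_zero_of_sum_ne_zero hsum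
  exact ⟨a, ha⟩

end IsLMC

/-- The submatrix of the backward matrix of `μ` with columns the words `w k`, `k : β`.
With `β` finite, unlike `List A`, it has a `Matrix.rank`. -/
noncomputable def lmcBackward (μ : A → Matrix S S ℝ) (w : β → List A) : Matrix S β ℝ :=
  Matrix.of fun i k => lmcB μ i (w k)

/-- The column space of the backward matrix of `μ`, whose dimension is `lmcRank μ`. -/
noncomputable def lmcColumnSpace (μ : A → Matrix S S ℝ) : Submodule ℝ (S → ℝ) :=
  Submodule.span ℝ (Set.range fun w : List A => fun i : S => lmcB μ i w)

theorem range_mulVecLin_lmcBackward_le [Fintype β] (μ : A → Matrix S S ℝ) (w : β → List A) :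
    LinearMap.range (lmcBackward μ w).mulVecLin ≤ lmcColumnSpace μ := by
  rw [Matrix.range_mulVecLin]
  exact Submodule.span_mono (Set.range_subset_iff.2 fun k => ⟨w k, rfl⟩)

namespace lmcCovers

theorem exists_state_lmcB_eq_zero [Fintype A] (hcov : lmcCovers μ' μ) (hμ' : IsLMC μ') (i : S) :
    ∃ l, ∀ w, lmcB μ i w = 0 → lmcB μ' l w = 0 := by
  obtain ⟨C, hC_nonneg, hC_sum, hC⟩ := hcov
  have hsum : ∑ l, C i l ≠ 0 := by simp only [hC_sum, ne_eq, one_ne_zero, not_false_eq_true]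
  obtain ⟨l, -, hl⟩ := Finset.exists_ne_zero_of_sum_ne_zero hsum
  refine ⟨l, fun w hw => ?_⟩
  have hterms := (Finset.sum_eq_zero_iff_of_nonneg fun l _ =>
    mul_nonneg (hC_nonneg i l) (hμ'.lmcB_nonneg l w)).1 ((hC i w).trans hw)
  exact (mul_eq_zero.1 (hterms l (Finset.mem_univ l))).resolve_left hl

theorem rank_lmcBackward_eq [Fintype β] (hcov : lmcCovers μ' μ) (hrk : lmcRank μ' = lmcRank μ)
    (w : β → List A) : (lmcBackward μ' w).rank = (lmcBackward μ w).rank := by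
  obtain ⟨C, -, -, hC⟩ := hcov
  have hC_space : (lmcColumnSpace μ').map (Matrix.of C).mulVecLin = lmcColumnSpace μ := by
    rw [lmcColumnSpace, Submodule.map_span, ← Set.range_comp]
    exact congrArg (Submodule.span ℝ <| Set.range ·) (funext₂ fun w i => hC i w)
  have hC_backward : Matrix.of C * lmcBackward μ' w = lmcBackward μ w :=
    Matrix.ext fun i k => hC i (w k)
  rw [← hC_backward, Matrix.rank, Matrix.rank, Matrix.mulVecLin_mul, LinearMap.range_comp]
  refine (finrank_map_of_le_of_finrank_map_eq _ (range_mulVecLin_lmcBackward_le μ' w) ?_).symm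
  rw [hC_space]
  exact hrk.symm

end lmcCovers

end LabelledMarkovChain

section ConstructedChain

variable {n m : ℕ} (M : Matrix (Fin n) (Fin m) ℝ)

theorem lmcB_lmcMu_initial (s : Fin n ⊕ Unit) : lmcB (lmcMu M) (Sum.inl ()) [Sum.inr s] = 0 := by
  rcases s with j | _ <;> simp [lmcB_singleton, lmcMu]

theorem lmcB_lmcMu_middle (i : Fin m) (j : Fin n) :
    lmcB (lmcMu M) (Sum.inr (Sum.inl i)) [Sum.inr (Sum.inl j)] = M j i := by
  simp [lmcB_singleton, lmcMu]

theorem lmcB_lmcMu_final_a (i : Fin m) :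
    lmcB (lmcMu M) (Sum.inr (Sum.inr ())) [Sum.inl i] = 0 := by
  simp [lmcB_singleton, lmcMu]

theorem lmcB_lmcMu_final_b (j : Fin n) :
    lmcB (lmcMu M) (Sum.inr (Sum.inr ())) [Sum.inr (Sum.inl j)] = 0 := by
  simp [lmcB_singleton, lmcMu]

/-- The one-letter words `b_j` over the alphabet of `lmcMu`; the corresponding columns of the
backward matrix of a covering chain are, up to zero entries, the rows of the factor `W`. -/
def bWord (m : ℕ) {n : ℕ} (j : Fin n) : List (Fin m ⊕ Fin n ⊕ Unit) :=
  [Sum.inr (Sum.inl j)]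

theorem rank_lmcBackward_lmcMu_bWord_le : (lmcBackward (lmcMu M) (bWord m)).rank ≤ M.rank := by
  let E : Matrix (Unit ⊕ Fin m ⊕ Unit) (Fin m) ℝ :=
    (1 : Matrix (Unit ⊕ Fin m ⊕ Unit) (Unit ⊕ Fin m ⊕ Unit) ℝ).submatrix id (Sum.inr ∘ Sum.inl)
  have hE : lmcBackward (lmcMu M) (bWord m) = E * Mᵀ := by
    ext (⟨⟩ | i | ⟨⟩) j
    · simpa [E, lmcBackward, bWord, Matrix.mul_apply] using lmcB_lmcMu_initial M (Sum.inl j)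
    · simp [E, lmcBackward, bWord, Matrix.mul_apply, Matrix.one_apply, lmcB_lmcMu_middle]
    · simpa [E, lmcBackward, bWord, Matrix.mul_apply] using lmcB_lmcMu_final_b M j
  rw [hE, ← M.rank_transpose]
  exact Matrix.rank_mul_le_right E Mᵀ

variable {M} {S' : Type} [Fintype S'] [DecidableEq S']
  {μ' : (Fin m ⊕ Fin n ⊕ Unit) → Matrix S' S' ℝ}

theorem lmcCovers.exists_ne_lmcB_bWord_eq_zero (hcov : lmcCovers μ' (lmcMu M)) (hμ' : IsLMC μ') :
    ∃ t u, t ≠ u ∧ ∀ j, lmcB μ' t (bWord m j) = 0 ∧ lmcB μ' u (bWord m j) = 0 := by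
  obtain ⟨t, ht⟩ := hcov.exists_state_lmcB_eq_zero hμ' (Sum.inr (Sum.inr ()))
  obtain ⟨u, hu⟩ := hcov.exists_state_lmcB_eq_zero hμ' (Sum.inl ())
  refine ⟨t, u, ?_, fun j => ⟨ht _ (lmcB_lmcMu_final_b M j), hu _ (lmcB_lmcMu_initial M _)⟩⟩
  rintro rfl
  obtain ⟨a, ha⟩ := hμ'.exists_lmcB_singleton_ne_zero t
  rcases a with i | s
  · exact ha (ht _ (lmcB_lmcMu_final_a M i))
  · exact ha (hu _ (lmcB_lmcMu_initial M s))

end ConstructedChain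

theorem stmt7_general {n m d : ℕ} (M : Matrix (Fin n) (Fin m) ℝ)
    {S' : Type} [Fintype S'] [DecidableEq S'] (hS' : Fintype.card S' = d + 2)
    (μ' : (Fin m ⊕ Fin n ⊕ Unit) → Matrix S' S' ℝ) (hμ' : IsLMC μ')
    (hcov : lmcCovers μ' (lmcMu M)) :
    ∃ W : Matrix (Fin n) (Fin d) ℝ, ∃ H : Matrix (Fin d) (Fin m) ℝ,
      (∀ j l, 0 ≤ W j l) ∧ (∀ l i, 0 ≤ H l i) ∧ M = W * H ∧
      (lmcRank μ' = lmcRank (lmcMu M) → W.rank = M.rank) := by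
  obtain ⟨t, u, htu, hzero⟩ := hcov.exists_ne_lmcB_bWord_eq_zero hμ'
  obtain ⟨f, hf⟩ := exists_embedding_range_eq_compl {t, u} (by rw [hS', Finset.card_pair htu])
  have ⟨C, hC_nonneg, _, hC⟩ := hcov
  let B : Matrix S' (Fin n) ℝ := lmcBackward μ' (bWord m)
  let C_mid : Matrix (Fin m) S' ℝ := Matrix.of fun i => C (Sum.inr (Sum.inl i))
  let W : Matrix (Fin n) (Fin d) ℝ := Bᵀ.submatrix id f
  let H : Matrix (Fin d) (Fin m) ℝ := C_midᵀ.submatrix f id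
  have hM : (C_mid * B)ᵀ = M :=
    Matrix.ext fun j i => (hC _ (bWord m j)).trans (lmcB_lmcMu_middle M i j)
  have hB : ∀ j, ∀ l ∉ Set.range f, Bᵀ j l = 0 := by
    intro j l hl
    obtain rfl | rfl : l = t ∨ l = u := or_iff_not_imp_left.2 (by simpa [hf] using hl)
    exacts [(hzero j).1, (hzero j).2]
  have hWH : M = W * H := by
    rw [← hM, Matrix.transpose_mul, mul_eq_submatrix_mul_submatrix _ _ f.injective hB]
  refine ⟨W, H, fun j k => hμ'.lmcB_nonneg _ _, fun k i => hC_nonneg _ _, hWH, fun hrk => ?_⟩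
  refine le_antisymm ?_ (hWH ▸ Matrix.rank_mul_le_left W H)
  calc W.rank ≤ Bᵀ.rank := Matrix.rank_submatrix_le _ _ _
    _ = B.rank := Matrix.rank_transpose B
    _ = (lmcBackward (lmcMu M) (bWord m)).rank := hcov.rank_lmcBackward_eq hrk _
    _ ≤ M.rank := rank_lmcBackward_lmcMu_bWord_le M

/-- Let `M ∈ ℚ_+^{n×m}` be nonzero and column-stochastic and `ℳ` the LMC constructed
from it. Any LMC `ℳ'` with `d+2` states over the same alphabet covering `ℳ`
determines a `d`-dimensional NMF `M = W · H`; moreover if `rk(ℳ') = rk(ℳ)` then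
`rank(W) = rank(M)`. -/
theorem stmt7 {n m : ℕ} (d : ℕ) (hd : 0 < d)
    (M : Matrix (Fin n) (Fin m) ℚ)
    (hMnn : ∀ j i, 0 ≤ M j i) (hMne : M ≠ 0) (hMcs : ∀ i : Fin m, ∑ j, M j i = 1)
    (μ' : (Fin m ⊕ Fin n ⊕ Unit) → Matrix (Fin (d + 2)) (Fin (d + 2)) ℝ)
    (hμ' : IsLMC μ')
    (hcov : lmcCovers μ' (lmcMu (M.map ((↑) : ℚ → ℝ)))) :
    ∃ W : Matrix (Fin n) (Fin d) ℝ, ∃ H : Matrix (Fin d) (Fin m) ℝ,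
      (∀ j l, 0 ≤ W j l) ∧ (∀ l i, 0 ≤ H l i) ∧
      M.map ((↑) : ℚ → ℝ) = W * H ∧
      (lmcRank μ' = lmcRank (lmcMu (M.map ((↑) : ℚ → ℝ))) →
        W.rank = (M.map ((↑) : ℚ → ℝ)).rank) :=
  stmt7_general (M.map (↑)) (Fintype.card_fin _) μ' hμ' hcov
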